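/- arXiv:2502.17359 — 3 statements merged into one kernel-verified Lean document; each statement's English description precedes it below -/
import Mathlib

section
/- Let X be a real random variable with distribution μ, let x₀ ∈ ℝ, let g : ℝ → ℝ satisfy g(x) ≤ 0 for all x < x₀ and g(x) ≥ 0 for all x > x₀ (a single sign change at x₀), and let f : ℝ → ℝ be nondecreasing, with f·g and g integrable with respect to μ. Then E[f(X)·g(X)] ≥ f(x₀)·E[g(X)]. -/
open MeasureTheory

/-- If `g` has a single sign change at `x₀` (nonpositive to the left, nonnegative to the
right) and `f` is nondecreasing, with `f·g` and `g` integrable with respect to the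
distribution `μ` of the real random variable, then `E[f(X)·g(X)] ≥ f(x₀)·E[g(X)]`. -/
theorem integral_mul_ge_of_single_sign_change
    (μ : Measure ℝ) [IsProbabilityMeasure μ]
    (x₀ : ℝ) (f g : ℝ → ℝ)
    (hg_neg : ∀ x < x₀, g x ≤ 0)
    (hg_pos : ∀ x > x₀, 0 ≤ g x)
    (hf : Monotone f)
    (hfg_int : Integrable (fun x => f x * g x) μ)
    (hg_int : Integrable g μ) :
    ∫ x, f x * g x ∂μ ≥ f x₀ * ∫ x, g x ∂μ := by
  rw [ge_iff_le, ← integral_const_mul]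
  refine integral_mono (hg_int.const_mul _) hfg_int fun x => ?_
  -- Pointwise `(f x - f x₀) * g x ≥ 0`: both factors change sign from `≤ 0` to `≥ 0` at `x₀`,
  -- and the first vanishes at `x₀` itself, where the sign of `g` is unconstrained.
  rcases lt_trichotomy x x₀ with h | rfl | h
  · exact mul_le_mul_of_nonpos_right (hf h.le) (hg_neg x h)
  · exact le_rfl
  · exact mul_le_mul_of_nonneg_right (hf h.le) (hg_pos x h)
end

section
/- Let X be a real random variable with distribution μ, let x₀ ∈ ℝ, let g : ℝ → ℝ satisfy g(x) ≤ 0 for all x < x₀ and g(x) ≥ 0 for all x > x₀, let f : ℝ → ℝ be nondecreasing, with f, g and f·g integrable with respect to μ, and assume E[g(X)] = 0. Then the covariance Cov(f(X), g(X)) = E[f(X)g(X)] − E[f(X)]·E[g(X)] is nonnegative. -/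
open MeasureTheory

/-- If `g` has a single sign change at `x₀`, `f` is nondecreasing, `f`, `g` and `f·g`
are integrable with respect to the distribution `μ`, and `E[g(X)] = 0`, then the
covariance `Cov(f(X), g(X)) = E[f(X)g(X)] − E[f(X)]·E[g(X)]` is nonnegative. -/
theorem covariance_nonneg_of_single_sign_change
    (μ : Measure ℝ) [IsProbabilityMeasure μ]
    (x₀ : ℝ) (f g : ℝ → ℝ)
    (hg_neg : ∀ x < x₀, g x ≤ 0)
    (hg_pos : ∀ x > x₀, 0 ≤ g x)
    (hf : Monotone f)
    (hf_int : Integrable f μ)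
    (hg_int : Integrable g μ)
    (hfg_int : Integrable (fun x => f x * g x) μ)
    (hg_mean : ∫ x, g x ∂μ = 0) :
    0 ≤ (∫ x, f x * g x ∂μ) - (∫ x, f x ∂μ) * (∫ x, g x ∂μ) := by
  -- `f - f x₀` has the same sign as `g` off `x₀` and vanishes at `x₀`, where the sign of
  -- `g` is unconstrained.
  have h_nonneg : 0 ≤ ∫ x, (f x * g x - f x₀ * g x) ∂μ := by
    refine integral_nonneg fun x => ?_
    show 0 ≤ f x * g x - f x₀ * g x
    rw [← sub_mul]
    rcases lt_trichotomy x x₀ with h | h | h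
    · exact mul_nonneg_of_nonpos_of_nonpos (sub_nonpos.2 (hf h.le)) (hg_neg x h)
    · simp [h]
    · exact mul_nonneg (sub_nonneg.2 (hf h.le)) (hg_pos x h)
  rw [integral_sub hfg_int (hg_int.const_mul _), integral_const_mul, hg_mean] at h_nonneg
  simpa [hg_mean] using h_nonneg
end

section
/- Let Q : I → ℝ be a three-times continuously differentiable function on an open interval I ⊆ ℝ with Q'(k) > 0, Q''(k) ≤ 0 and Q'''(k) ≤ 0 for all k ∈ I, and let K denote the inverse function of Q, defined on Q(I). Define F(q) := q·K'(q) − K(q). Then F is convex on { q ∈ Q(I) : q ≥ 0 }. -/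
/-!
Writing `q = Q k`, one has `K'(q) = 1 / Q'(k)` and `K''(q) = -Q''(k) / Q'(k)³`, so that
`F'(q) = q K''(q) = q · (-Q''(k)) / Q'(k)³` with `k = K q`. As `q ≥ 0` increases, so does `k`;
then `-Q''(k) ≥ 0` is nondecreasing because `Q''' ≤ 0`, and `1 / Q'(k)³ > 0` is nondecreasing
because `Q'' ≤ 0`. Hence `F'` is a product of nonnegative nondecreasing functions, and `F` is convex.
The derivatives of `K` come from the inverse function theorem, which also shows that `Q(I)` is open.
-/

open Set Filter Topology in
/-- Second claim of the paper's Lemma 4: for a `C³` flow–density relation `Q` on an open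
interval with `Q' > 0`, `Q'' ≤ 0` and `Q''' ≤ 0` (aggressive driving), and `K = Q⁻¹`,
the function `F(q) = q·K'(q) − K(q)` is convex on the nonnegative part of `Q(I)`. -/
theorem dNdx_convex
    (a b : ℝ) (hab : a < b) (Q K : ℝ → ℝ)
    (hQ : ContDiffOn ℝ 3 Q (Set.Ioo a b))
    (hQ' : ∀ k ∈ Set.Ioo a b, 0 < deriv Q k)
    (hQ'' : ∀ k ∈ Set.Ioo a b, deriv (deriv Q) k ≤ 0)
    (hQ''' : ∀ k ∈ Set.Ioo a b, deriv (deriv (deriv Q)) k ≤ 0)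
    (hKQ : ∀ k ∈ Set.Ioo a b, K (Q k) = k)
    (hQK : ∀ q ∈ Q '' Set.Ioo a b, Q (K q) = q) :
    ConvexOn ℝ {q ∈ Q '' Set.Ioo a b | 0 ≤ q}
      (fun q => q * deriv K q - K q) := by
  have hQ1 : ContDiffOn ℝ 2 (deriv Q) (Ioo a b) := hQ.deriv_of_isOpen isOpen_Ioo (by norm_num)
  have hQ2 : ContDiffOn ℝ 1 (deriv (deriv Q)) (Ioo a b) :=
    hQ1.deriv_of_isOpen isOpen_Ioo (by norm_num)
  have strictQ : ∀ k ∈ Ioo a b, HasStrictDerivAt Q (deriv Q k) k := fun k hk =>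
    (hQ.contDiffAt (isOpen_Ioo.mem_nhds hk)).hasStrictDerivAt (by norm_num)
  have derivQ1 : ∀ k ∈ Ioo a b, HasDerivAt (deriv Q) (deriv (deriv Q) k) k := fun k hk =>
    ((hQ1.contDiffAt (isOpen_Ioo.mem_nhds hk)).differentiableAt (by norm_num)).hasDerivAt
  have monoQ : StrictMonoOn Q (Ioo a b) :=
    strictMonoOn_of_deriv_pos (convex_Ioo a b) hQ.continuousOn (by simpa using hQ')
  have antiQ1 : AntitoneOn (deriv Q) (Ioo a b) :=
    antitoneOn_of_deriv_nonpos (convex_Ioo a b) hQ1.continuousOn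
      (by simpa using hQ1.differentiableOn (by norm_num)) (by simpa using hQ'')
  have antiQ2 : AntitoneOn (deriv (deriv Q)) (Ioo a b) :=
    antitoneOn_of_deriv_nonpos (convex_Ioo a b) hQ2.continuousOn
      (by simpa using hQ2.differentiableOn (by norm_num)) (by simpa using hQ''')
  have derivK : ∀ k ∈ Ioo a b, HasDerivAt K (deriv Q k)⁻¹ (Q k) := fun k hk =>
    ((strictQ k hk).to_local_left_inverse (hQ' k hk).ne'
      (by filter_upwards [isOpen_Ioo.mem_nhds hk] with x hx using hKQ x hx)).hasDerivAt
  have image_nhds : ∀ k ∈ Ioo a b, Q '' Ioo a b ∈ 𝓝 (Q k) := fun k hk => by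
    rw [← (strictQ k hk).map_nhds_eq (hQ' k hk).ne']
    exact image_mem_map (isOpen_Ioo.mem_nhds hk)
  have derivK1 : ∀ k ∈ Ioo a b,
      HasDerivAt (deriv K) (-deriv (deriv Q) k / deriv Q k ^ 3) (Q k) := fun k hk => by
    have h1 : HasDerivAt (fun q => (deriv Q (K q))⁻¹)
        (-(deriv (deriv Q) k * (deriv Q k)⁻¹) / deriv Q k ^ 2) (Q k) := by
      have hd := derivQ1 k hk
      rw [← hKQ k hk] at hd
      have h2 := (hd.comp (Q k) (derivK k hk)).inv
        (by simpa [hKQ k hk] using (hQ' k hk).ne')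
      simp only [Function.comp_def, hKQ k hk] at h2
      exact h2
    have h3 : deriv K =ᶠ[𝓝 (Q k)] fun q => (deriv Q (K q))⁻¹ := by
      filter_upwards [image_nhds k hk]
      rintro _ ⟨x, hx, rfl⟩
      rw [(derivK x hx).deriv, hKQ x hx]
    refine (h1.congr_of_eventuallyEq h3).congr_deriv ?_
    have := (hQ' k hk).ne'
    field_simp
  have derivF : ∀ k ∈ Ioo a b, HasDerivAt (fun q => q * deriv K q - K q)
      (Q k * (-deriv (deriv Q) k / deriv Q k ^ 3)) (Q k) := fun k hk => by
    refine (((hasDerivAt_id' (Q k)).mul (derivK1 k hk)).sub (derivK k hk)).congr_deriv ?_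
    rw [(derivK k hk).deriv]
    ring
  have hconv : Convex ℝ {q ∈ Q '' Ioo a b | 0 ≤ q} :=
    (isPreconnected_Ioo.image Q hQ.continuousOn).ordConnected.convex.inter (convex_Ici 0)
  refine MonotoneOn.convexOn_of_deriv hconv ?_ ?_ ?_
  · rintro _ ⟨⟨k, hk, rfl⟩, -⟩
    exact (derivF k hk).continuousAt.continuousWithinAt
  · intro q hq
    obtain ⟨⟨k, hk, rfl⟩, -⟩ := interior_subset hq
    exact (derivF k hk).differentiableAt.differentiableWithinAt
  · intro p hp q hq hpq
    obtain ⟨⟨k, hk, rfl⟩, hk0⟩ := interior_subset hp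
    obtain ⟨⟨l, hl, rfl⟩, hl0⟩ := interior_subset hq
    rw [(derivF k hk).deriv, (derivF l hl).deriv]
    have hkl : k ≤ l := (monoQ.le_iff_le hk hl).1 hpq
    have hk2 := hQ'' k hk
    have hl2 := hQ'' l hl
    have hl1 := hQ' l hl
    have hk1 := hQ' k hk
    have h1 := antiQ1 hk hl hkl
    have h2 := antiQ2 hk hl hkl
    have hnum : 0 ≤ -deriv (deriv Q) k := by linarith
    have hnum' : 0 ≤ -deriv (deriv Q) l := by linarith
    exact mul_le_mul hpq (div_le_div₀ hnum' (by linarith) (by positivity)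
      (pow_le_pow_left₀ hl1.le h1 3)) (by positivity) hl0
end
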